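/- Suppose X is c-quasiconvex, Y is c′-quasiconvex, G ⊊ X and G′ ⊊ Y are domains, and f : G → G′ is an M-quasihyperbolic homeomorphism. Then f is fully M′-quasihyperbolic with M′ = 216(cc′M)²; that is, for every subdomain D of G and all x, y ∈ D, (1/M′)·k_D(x,y) ≤ k_{f(D)}(f(x),f(y)) ≤ M′·k_D(x,y). In particular f is φ-FQC with φ(t) = M′t. -/

import Mathlib

open Metric Set Filter

section QHDefs

variable {X : Type*} [MetricSpace X] {Y : Type*} [MetricSpace Y]

/-- Distance to the boundary of `G`. -/
noncomputable def bdist (G : Set X) (z : X) : ℝ := Metric.infDist z (frontier G)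

/-- A unit-speed (1-Lipschitz, arclength-parametrized) rectifiable curve in `G`
from `x` to `y`, parametrized on `[0, L]`, where `L` is its length. -/
structure CurveIn (G : Set X) (γ : ℝ → X) (L : ℝ) (x y : X) : Prop where
  nonneg : 0 ≤ L
  lip : LipschitzOnWith 1 γ (Set.Icc 0 L)
  source : γ 0 = x
  target : γ L = y
  mem : ∀ t ∈ Set.Icc 0 L, γ t ∈ G

/-- Quasihyperbolic length of the subcurve `γ|[s,t]` in `G`: `∫_γ |dz|/δ_G(z)`. -/
noncomputable def qhLengthOn (G : Set X) (γ : ℝ → X) (s t : ℝ) : ℝ :=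
  ∫ u in s..t, 1 / bdist G (γ u)

/-- Quasihyperbolic length of a curve parametrized on `[0,L]`. -/
noncomputable def qhLength (G : Set X) (γ : ℝ → X) (L : ℝ) : ℝ := qhLengthOn G γ 0 L

/-- Quasihyperbolic distance in `G`. -/
noncomputable def qhDist (G : Set X) (x y : X) : ℝ :=
  sInf {l | ∃ γ L, CurveIn G γ L x y ∧ qhLength G γ L = l}

/-- `X` is a `c`-quasiconvex metric space. -/
def QCSpace (c : ℝ) (X : Type*) [MetricSpace X] : Prop :=
  ∀ x y : X, ∃ γ L, CurveIn (Set.univ : Set X) γ L x y ∧ L ≤ c * dist x y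

/-- A set `G` is `c`-quasiconvex. -/
def QCSet (c : ℝ) (G : Set X) : Prop :=
  ∀ x ∈ G, ∀ y ∈ G, ∃ γ L, CurveIn G γ L x y ∧ L ≤ c * dist x y

/-- A domain: a nonempty connected open set. -/
def IsDomainSet (G : Set X) : Prop := IsOpen G ∧ IsConnected G

/-- A proper domain: a nonempty connected open set, different from the whole space. -/
def IsProperDomain (G : Set X) : Prop := IsOpen G ∧ IsConnected G ∧ G ≠ Set.univ

/-- `G` is an `a`-John domain: each pair of points is joined by a rectifiable arc
satisfying the cone condition. -/
def IsJohn (a : ℝ) (G : Set X) : Prop :=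
  ∀ x ∈ G, ∀ y ∈ G, ∃ γ L, CurveIn G γ L x y ∧
    ∀ t ∈ Set.Icc 0 L, min t (L - t) ≤ a * bdist G (γ t)

/-- `G` is a `b`-uniform domain: each pair of points is joined by a double `b`-cone arc. -/
def IsUniform (b : ℝ) (G : Set X) : Prop :=
  ∀ x ∈ G, ∀ y ∈ G, ∃ γ L, CurveIn G γ L x y ∧ L ≤ b * dist x y ∧
    ∀ t ∈ Set.Icc 0 L, min t (L - t) ≤ b * bdist G (γ t)

/-- `G` is a locally `a`-John domain. -/
def LocallyJohn (a : ℝ) (G : Set X) : Prop :=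
  ∀ x ∈ G, ∀ r : ℝ, 0 < r → r ≤ bdist G x → IsJohn a (Metric.ball x r)

/-- The `h`-coarse quasihyperbolic length of the subcurve `γ|[s,t]` in `G`:
the supremum of sums `Σ k_G(x_{j-1},x_j)` over `h`-coarse sequences of successive
points of the arc (with the convention that it is `0` if there are none). -/
noncomputable def coarseQHLength (G : Set X) (γ : ℝ → X) (s t h : ℝ) : ℝ :=
  sSup {S | ∃ n : ℕ, 0 < n ∧ ∃ u : ℕ → ℝ,
    (∀ i < n, u i ≤ u (i + 1)) ∧ (∀ i ≤ n, u i ∈ Set.Icc s t) ∧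
    (∀ i < n, h ≤ qhDist G (γ (u i)) (γ (u (i + 1)))) ∧
    S = ∑ i ∈ Finset.range n, qhDist G (γ (u i)) (γ (u (i + 1)))}

/-- `γ` (parametrized on `[0,L]`) is a `(ν,h)`-solid arc in `G`. -/
def SolidArc (G : Set X) (γ : ℝ → X) (L ν h : ℝ) : Prop :=
  ∀ s t : ℝ, 0 ≤ s → s ≤ t → t ≤ L →
    coarseQHLength G γ s t h ≤ ν * qhDist G (γ s) (γ t)

/-- `γ` (parametrized on `[0,L]`) is an `ε`-short arc in `G`. -/
def ShortArc (G : Set X) (γ : ℝ → X) (L ε : ℝ) : Prop :=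
  qhLength G γ L ≤ qhDist G (γ 0) (γ L) + ε

/-- A map is weakly `H`-quasisymmetric. -/
def WeakQS (H : ℝ) (f : X → Y) : Prop :=
  ∀ x a b : X, dist x a ≤ dist x b → dist (f x) (f a) ≤ H * dist (f x) (f b)

/-- Image of a subset `D ⊆ G` under a homeomorphism `f : G ≃ₜ G'`, as a subset of `Y`. -/
def imSet {G : Set X} {G' : Set Y} (f : ↥G ≃ₜ ↥G') (D : Set X) : Set Y :=
  Subtype.val '' (f '' (Subtype.val ⁻¹' D))

/-- `f : G ≃ₜ G'` is `M`-quasihyperbolic. -/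
def MQH (M : ℝ) {G : Set X} {G' : Set Y} (f : ↥G ≃ₜ ↥G') : Prop :=
  ∀ x y : ↥G, (1 / M) * qhDist G ↑x ↑y ≤ qhDist G' ↑(f x) ↑(f y) ∧
    qhDist G' ↑(f x) ↑(f y) ≤ M * qhDist G ↑x ↑y

/-- `f : G ≃ₜ G'` is `C`-coarsely `M`-quasihyperbolic. -/
def CQH (M C : ℝ) {G : Set X} {G' : Set Y} (f : ↥G ≃ₜ ↥G') : Prop :=
  ∀ x y : ↥G, (qhDist G ↑x ↑y - C) / M ≤ qhDist G' ↑(f x) ↑(f y) ∧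
    qhDist G' ↑(f x) ↑(f y) ≤ M * qhDist G ↑x ↑y + C

/-- `f : G ≃ₜ G'` is freely `φ`-quasiconformal: in every subdomain, the
quasihyperbolic distances of `f` and `f⁻¹` are controlled by `φ`. -/
def FQC (φ : ℝ → ℝ) {G : Set X} {G' : Set Y} (f : ↥G ≃ₜ ↥G') : Prop :=
  ∀ D : Set X, ∀ hD : D ⊆ G, IsDomainSet D →
    ∀ x : X, ∀ hx : x ∈ D, ∀ y : X, ∀ hy : y ∈ D,
      qhDist (imSet f D) ↑(f ⟨x, hD hx⟩) ↑(f ⟨y, hD hy⟩) ≤ φ (qhDist D x y) ∧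
      qhDist D x y ≤ φ (qhDist (imSet f D) ↑(f ⟨x, hD hx⟩) ↑(f ⟨y, hD hy⟩))

end QHDefs

section QuasihyperbolicMetric

variable {X : Type*} [MetricSpace X] {Y : Type*} [MetricSpace Y]

theorem bdist_le_add_dist (G : Set X) (x y : X) : bdist G x ≤ bdist G y + dist x y :=
  infDist_le_infDist_add_dist

theorem continuous_bdist (G : Set X) : Continuous (bdist G) :=
  continuous_infDist_pt _

theorem bdist_pos {G : Set X} (hG : IsOpen G) (hfr : (frontier G).Nonempty) {x : X}
    (hx : x ∈ G) : 0 < bdist G x := by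
  refine (isClosed_frontier.notMem_iff_infDist_pos hfr).1 fun h => ?_
  rw [hG.frontier_eq] at h
  exact h.2 hx

namespace CurveIn

variable {G : Set X} {γ : ℝ → X} {L : ℝ} {x y : X}

theorem dist_le (h : CurveIn G γ L x y) {s t : ℝ} (hs : s ∈ Icc 0 L) (ht : t ∈ Icc 0 L) :
    dist (γ s) (γ t) ≤ |s - t| := by
  simpa [Real.dist_eq] using h.lip.dist_le_mul s hs t ht

theorem dist_endpoints_le (h : CurveIn G γ L x y) : dist x y ≤ L := by
  have := h.dist_le (left_mem_Icc.2 h.nonneg) (right_mem_Icc.2 h.nonneg)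
  rwa [h.source, h.target, zero_sub, abs_neg, abs_of_nonneg h.nonneg] at this

theorem continuousOn (h : CurveIn G γ L x y) : ContinuousOn γ (Icc 0 L) :=
  h.lip.continuousOn

/-- The subcurve of a curve between two parameters. -/
theorem sub (h : CurveIn G γ L x y) {s t : ℝ} (hs : 0 ≤ s) (hst : s ≤ t) (ht : t ≤ L) :
    CurveIn G (fun u => γ (u + s)) (t - s) (γ s) (γ t) where
  nonneg := sub_nonneg.2 hst
  lip := LipschitzOnWith.of_dist_le_mul fun u hu v hv => by
    have := h.dist_le (s := u + s) (t := v + s) ⟨by linarith [hu.1], by linarith [hu.2]⟩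
      ⟨by linarith [hv.1], by linarith [hv.2]⟩
    simpa [Real.dist_eq] using this
  source := by simp
  target := by simp
  mem u hu := h.mem _ ⟨by linarith [hu.1], by linarith [hu.2]⟩

theorem reverse (h : CurveIn G γ L x y) : CurveIn G (fun u => γ (L - u)) L y x where
  nonneg := h.nonneg
  lip := LipschitzOnWith.of_dist_le_mul fun u hu v hv => by
    have := h.dist_le (s := L - u) (t := L - v) ⟨by linarith [hu.2], by linarith [hu.1]⟩
      ⟨by linarith [hv.2], by linarith [hv.1]⟩
    rw [sub_sub_sub_cancel_left, abs_sub_comm] at this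
    simpa [Real.dist_eq] using this
  source := by simp [h.target]
  target := by simp [h.source]
  mem u hu := h.mem _ ⟨by linarith [hu.2], by linarith [hu.1]⟩

/-- Concatenation of two curves. -/
theorem concat {z : X} {γ' : ℝ → X} {L' : ℝ} (h : CurveIn G γ L x y)
    (h' : CurveIn G γ' L' y z) :
    CurveIn G (fun u => if u ≤ L then γ u else γ' (u - L)) (L + L') x z where
  nonneg := add_nonneg h.nonneg h'.nonneg
  lip := by
    have key : ∀ u ∈ Icc 0 (L + L'), ∀ v ∈ Icc 0 (L + L'), u ≤ v →
        dist (if u ≤ L then γ u else γ' (u - L)) (if v ≤ L then γ v else γ' (v - L)) ≤ v - u := by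
      intro u hu v hv huv
      rcases le_or_gt v L with hvL | hvL
      · rw [if_pos (huv.trans hvL), if_pos hvL]
        refine (h.dist_le ⟨hu.1, huv.trans hvL⟩ ⟨hv.1, hvL⟩).trans_eq ?_
        rw [abs_sub_comm, abs_of_nonneg (sub_nonneg.2 huv)]
      · rw [if_neg hvL.not_ge]
        have hv' : v - L ∈ Icc 0 L' := ⟨by linarith, by linarith [hv.2]⟩
        rcases le_or_gt u L with huL | huL
        · rw [if_pos huL]
          have h₁ := h.dist_le ⟨hu.1, huL⟩ (right_mem_Icc.2 h.nonneg)
          have h₂ := h'.dist_le (left_mem_Icc.2 h'.nonneg) hv'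
          rw [h.target, abs_sub_comm, abs_of_nonneg (sub_nonneg.2 huL)] at h₁
          rw [h'.source, zero_sub, abs_neg, abs_of_nonneg hv'.1] at h₂
          linarith [dist_triangle (γ u) y (γ' (v - L))]
        · rw [if_neg huL.not_ge]
          refine (h'.dist_le ⟨by linarith, by linarith [hu.2]⟩ hv').trans_eq ?_
          rw [sub_sub_sub_cancel_right, abs_sub_comm, abs_of_nonneg (sub_nonneg.2 huv)]
    refine LipschitzOnWith.of_dist_le_mul fun u hu v hv => ?_
    rw [NNReal.coe_one, one_mul, Real.dist_eq]
    rcases le_total u v with huv | huv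
    · rw [abs_sub_comm, abs_of_nonneg (sub_nonneg.2 huv)]
      exact key u hu v hv huv
    · rw [dist_comm, abs_of_nonneg (sub_nonneg.2 huv)]
      exact key v hv u hu huv
  source := by simp [h.nonneg, h.source]
  target := by
    rcases h'.nonneg.eq_or_lt with h0 | h0
    · have : y = z := by rw [← h'.source, ← h'.target, ← h0]
      simp [← h0, h.target, this]
    · simp [h0.not_ge, h'.target]
  mem u hu := by
    split_ifs with hL
    · exact h.mem u ⟨hu.1, hL⟩
    · exact h'.mem _ ⟨by linarith, by linarith [hu.2]⟩

theorem continuousOn_inv_bdist (h : CurveIn G γ L x y) (hG : IsOpen G)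
    (hfr : (frontier G).Nonempty) : ContinuousOn (fun u => 1 / bdist G (γ u)) (Icc 0 L) :=
  continuousOn_const.div ((continuous_bdist G).comp_continuousOn h.continuousOn)
    fun u hu => (bdist_pos hG hfr (h.mem u hu)).ne'

theorem intervalIntegrable (h : CurveIn G γ L x y) (hG : IsOpen G)
    (hfr : (frontier G).Nonempty) {s t : ℝ} (hs : 0 ≤ s) (hst : s ≤ t) (ht : t ≤ L) :
    IntervalIntegrable (fun u => 1 / bdist G (γ u)) MeasureTheory.volume s t :=
  ((h.continuousOn_inv_bdist hG hfr).mono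
    (by rw [uIcc_of_le hst]; exact Icc_subset_Icc hs ht)).intervalIntegrable

/-- A curve joining a point of `D` to a point off `D` meets the boundary of `D`. -/
theorem exists_mem_frontier {D : Set X} (h : CurveIn G γ L x y) (hD : IsOpen D) (hx : x ∈ D)
    (hy : y ∉ D) : ∃ t ∈ Icc 0 L, γ t ∈ frontier D := by
  by_contra! hcon
  have hsub : γ '' Icc 0 L ⊆ D := by
    refine (isPreconnected_Icc.image γ h.continuousOn).subset_of_closure_inter_subset hD
      ⟨x, ⟨0, left_mem_Icc.2 h.nonneg, h.source⟩, hx⟩ ?_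
    rintro _ ⟨hcl, t, ht, rfl⟩
    by_contra hn
    exact hcon t ht (by rw [hD.frontier_eq]; exact ⟨hcl, hn⟩)
  exact hy (hsub ⟨L, right_mem_Icc.2 h.nonneg, h.target⟩)

theorem bdist_le_length {D : Set X} (h : CurveIn G γ L x y) (hD : IsOpen D) (hx : x ∈ D)
    (hy : y ∉ D) : bdist D x ≤ L := by
  obtain ⟨t, ht, hfr⟩ := h.exists_mem_frontier hD hx hy
  refine (infDist_le_dist_of_mem hfr).trans ?_
  have := h.dist_le (left_mem_Icc.2 h.nonneg) ht
  rw [h.source, zero_sub, abs_neg, abs_of_nonneg ht.1] at this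
  exact this.trans ht.2

/-- A curve that is shorter than the distance of its source to the boundary of `D`
stays in `D`. -/
theorem of_length_lt_bdist {D : Set X} (h : CurveIn G γ L x y) (hD : IsOpen D) (hx : x ∈ D)
    (hL : L < bdist D x) : CurveIn D γ L x y where
  nonneg := h.nonneg
  lip := h.lip
  source := h.source
  target := h.target
  mem t ht := by
    by_contra hn
    have h₁ := h.sub le_rfl ht.1 ht.2
    rw [h.source] at h₁
    linarith [h₁.bdist_le_length hD hx hn, ht.2]

end CurveIn

theorem QCSpace.frontier_nonempty {c : ℝ} (hX : QCSpace c X) {D : Set X} (hD : IsOpen D)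
    (hne : D.Nonempty) (huniv : D ≠ univ) : (frontier D).Nonempty := by
  obtain ⟨x, hx⟩ := hne
  obtain ⟨y, hy⟩ := (ne_univ_iff_exists_notMem D).1 huniv
  obtain ⟨γ, L, hγ, -⟩ := hX x y
  obtain ⟨t, -, ht⟩ := hγ.exists_mem_frontier hD hx hy
  exact ⟨_, ht⟩

theorem QCSpace.bdist_le_mul_dist {c : ℝ} (hX : QCSpace c X) {D : Set X} (hD : IsOpen D)
    {x y : X} (hx : x ∈ D) (hy : y ∉ D) : bdist D x ≤ c * dist x y := by
  obtain ⟨γ, L, hγ, hL⟩ := hX x y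
  exact (hγ.bdist_le_length hD hx hy).trans hL

/-- The boundary distance of a subdomain is controlled by that of the ambient domain. -/
theorem QCSpace.bdist_mono {c : ℝ} (hX : QCSpace c X) (hc : 0 < c) {D G : Set X}
    (hD : IsOpen D) (hG : IsOpen G) (hDG : D ⊆ G) (hfr : (frontier G).Nonempty) {x : X}
    (hx : x ∈ D) : bdist D x ≤ c * bdist G x := by
  rw [← div_le_iff₀' hc]
  refine (le_infDist hfr).2 fun p hp => ?_
  rw [div_le_iff₀' hc]
  rw [hG.frontier_eq] at hp
  exact hX.bdist_le_mul_dist hD hx fun h => hp.2 (hDG h)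

theorem bddBelow_qhLength (G : Set X) (x y : X) :
    BddBelow {l | ∃ γ L, CurveIn G γ L x y ∧ qhLength G γ L = l} := by
  refine ⟨0, ?_⟩
  rintro _ ⟨γ, L, h, rfl⟩
  exact intervalIntegral.integral_nonneg h.nonneg fun u _ => one_div_nonneg.2 infDist_nonneg

theorem CurveIn.qhDist_le {G : Set X} {γ : ℝ → X} {L : ℝ} {x y : X} (h : CurveIn G γ L x y) :
    qhDist G x y ≤ qhLength G γ L :=
  csInf_le (bddBelow_qhLength G x y) ⟨γ, L, h, rfl⟩

theorem qhDist_nonneg (G : Set X) (x y : X) : 0 ≤ qhDist G x y := by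
  refine Real.sInf_nonneg ?_
  rintro _ ⟨γ, L, h, rfl⟩
  exact intervalIntegral.integral_nonneg h.nonneg fun u _ => one_div_nonneg.2 infDist_nonneg

theorem CurveIn.qhDist_le_qhLengthOn {G : Set X} {γ : ℝ → X} {L : ℝ} {x y : X}
    (h : CurveIn G γ L x y) {s t : ℝ} (hs : 0 ≤ s) (hst : s ≤ t) (ht : t ≤ L) :
    qhDist G (γ s) (γ t) ≤ qhLengthOn G γ s t := by
  refine (h.sub hs hst ht).qhDist_le.trans_eq ?_
  simp only [qhLength, qhLengthOn]
  rw [intervalIntegral.integral_comp_add_right (fun u => 1 / bdist G (γ u))]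
  simp

theorem qhLength_concat {G : Set X} (hG : IsOpen G) (hfr : (frontier G).Nonempty)
    {γ γ' : ℝ → X} {L L' : ℝ} {x y z : X} (h : CurveIn G γ L x y) (h' : CurveIn G γ' L' y z) :
    qhLength G (fun u => if u ≤ L then γ u else γ' (u - L)) (L + L') =
      qhLength G γ L + qhLength G γ' L' := by
  have hcc := h.concat h'
  have hLL : L ≤ L + L' := by linarith [h'.nonneg]
  simp only [qhLength, qhLengthOn]
  rw [← intervalIntegral.integral_add_adjacent_intervals
    (hcc.intervalIntegrable hG hfr le_rfl h.nonneg hLL)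
    (hcc.intervalIntegrable hG hfr h.nonneg hLL le_rfl)]
  congr 1
  · refine intervalIntegral.integral_congr fun u hu => ?_
    rw [uIcc_of_le h.nonneg] at hu
    simp [hu.2]
  · have := intervalIntegral.integral_comp_sub_right (a := L) (b := L + L')
      (fun u => 1 / bdist G (γ' u)) L
    rw [sub_self, add_sub_cancel_left] at this
    rw [← this]
    refine intervalIntegral.integral_congr_ae (Eventually.of_forall fun u hu => ?_)
    rw [uIoc_of_le hLL] at hu
    rw [if_neg hu.1.not_ge]

/-- In a quasiconvex space, close enough points are joined by curves of controlled
quasihyperbolic length. -/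
theorem QCSpace.exists_curveIn {c : ℝ} (hX : QCSpace c X) {G : Set X} (hG : IsOpen G)
    (hfr : (frontier G).Nonempty) {x y : X} (hx : x ∈ G) (hxy : c * dist x y ≤ bdist G x / 2) :
    ∃ γ L, CurveIn G γ L x y ∧ qhLength G γ L ≤ 2 * c * dist x y / bdist G x := by
  obtain ⟨γ, L, hγ, hL⟩ := hX x y
  have hpos := bdist_pos hG hfr hx
  have hγG := hγ.of_length_lt_bdist hG hx (by linarith)
  refine ⟨γ, L, hγG, ?_⟩
  calc qhLength G γ L ≤ ∫ _ in (0 : ℝ)..L, 2 / bdist G x := by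
        refine intervalIntegral.integral_mono_on hγ.nonneg
          (hγG.intervalIntegrable hG hfr le_rfl hγ.nonneg le_rfl)
          intervalIntegrable_const fun u hu => ?_
        have h₁ := hγ.dist_le (left_mem_Icc.2 hγ.nonneg) hu
        rw [hγ.source, zero_sub, abs_neg, abs_of_nonneg hu.1] at h₁
        rw [div_le_div_iff₀ (bdist_pos hG hfr (hγG.mem u hu)) hpos]
        linarith [bdist_le_add_dist G x (γ u), hu.2]
    _ = 2 * L / bdist G x := by simp; ring
    _ ≤ 2 * c * dist x y / bdist G x := by
        rw [mul_assoc]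
        gcongr

theorem QCSpace.qhDist_le {c : ℝ} (hX : QCSpace c X) {G : Set X} (hG : IsOpen G)
    (hfr : (frontier G).Nonempty) {x y : X} (hx : x ∈ G) (hxy : c * dist x y ≤ bdist G x / 2) :
    qhDist G x y ≤ 2 * c * dist x y / bdist G x := by
  obtain ⟨γ, L, hγ, hL⟩ := hX.exists_curveIn hG hfr hx hxy
  exact hγ.qhDist_le.trans hL

/-- Domains in quasiconvex spaces are rectifiably connected. -/
theorem QCSpace.curveIn_of_isPreconnected {c : ℝ} (hX : QCSpace c X) {G : Set X}
    (hG : IsOpen G) (hconn : IsPreconnected G) (hfr : (frontier G).Nonempty) {x y : X}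
    (hx : x ∈ G) (hy : y ∈ G) : ∃ γ L, CurveIn G γ L x y := by
  refine hconn.induction₂ (fun x y => ∃ γ L, CurveIn G γ L x y) (fun x hx => ?_) ?_ ?_ hx hy
  · refine mem_nhdsWithin_of_mem_nhds ?_
    have hcont : ContinuousAt (fun y => c * dist x y) x := by fun_prop
    have hpos : c * dist x x < bdist G x / 2 := by
      simpa using bdist_pos hG hfr hx
    filter_upwards [hcont.eventually_lt continuousAt_const hpos] with y hy
    obtain ⟨γ, L, hγ, -⟩ := hX.exists_curveIn hG hfr hx hy.le
    exact ⟨γ, L, hγ⟩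
  · rintro x y z - - - ⟨γ, L, h⟩ ⟨γ', L', h'⟩
    exact ⟨_, _, h.concat h'⟩
  · rintro x y - - ⟨γ, L, h⟩
    exact ⟨_, _, h.reverse⟩

theorem QCSpace.le_qhDist {c : ℝ} (hX : QCSpace c X) {G : Set X}
    (hG : IsOpen G) (hconn : IsPreconnected G) (hfr : (frontier G).Nonempty) {x y : X}
    (hx : x ∈ G) (hy : y ∈ G) {b : ℝ} (hb : ∀ γ L, CurveIn G γ L x y → b ≤ qhLength G γ L) :
    b ≤ qhDist G x y := by
  obtain ⟨γ, L, hγ⟩ := hX.curveIn_of_isPreconnected hG hconn hfr hx hy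
  refine le_csInf ⟨_, γ, L, hγ, rfl⟩ ?_
  rintro _ ⟨γ, L, h, rfl⟩
  exact hb γ L h

theorem QCSpace.dist_div_le_qhDist {c : ℝ} (hX : QCSpace c X) {G : Set X}
    (hG : IsOpen G) (hconn : IsPreconnected G) (hfr : (frontier G).Nonempty) {x y : X}
    (hx : x ∈ G) (hy : y ∈ G) : dist x y / (bdist G x + dist x y) ≤ qhDist G x y := by
  refine hX.le_qhDist hG hconn hfr hx hy fun γ L h => ?_
  have hpos := bdist_pos hG hfr hx
  have hL := h.dist_endpoints_le
  calc dist x y / (bdist G x + dist x y) ≤ L / (bdist G x + L) := by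
        rw [div_le_div_iff₀ (by positivity) (by linarith [h.nonneg])]
        nlinarith
    _ = ∫ _ in (0 : ℝ)..L, 1 / (bdist G x + L) := by simp; ring
    _ ≤ qhLength G γ L := by
        refine intervalIntegral.integral_mono_on h.nonneg intervalIntegrable_const
          (h.intervalIntegrable hG hfr le_rfl h.nonneg le_rfl) fun u hu => ?_
        have h₁ := h.dist_le hu (left_mem_Icc.2 h.nonneg)
        rw [h.source, sub_zero, abs_of_nonneg hu.1] at h₁
        exact one_div_le_one_div_of_le (bdist_pos hG hfr (h.mem u hu))
          (by linarith [bdist_le_add_dist G (γ u) x, hu.2])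

theorem QCSpace.dist_le_mul_qhDist {c : ℝ} (hX : QCSpace c X) {G : Set X}
    (hG : IsOpen G) (hconn : IsPreconnected G) (hfr : (frontier G).Nonempty) {x y : X}
    (hx : x ∈ G) (hy : y ∈ G) (hxy : dist x y ≤ bdist G x) :
    dist x y ≤ 2 * bdist G x * qhDist G x y := by
  have hpos := bdist_pos hG hfr hx
  have h := hX.dist_div_le_qhDist hG hconn hfr hx hy
  rw [div_le_iff₀ (by positivity)] at h
  nlinarith [qhDist_nonneg G x y]

theorem QCSpace.qhDist_triangle {c : ℝ} (hX : QCSpace c X) {G : Set X}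
    (hG : IsOpen G) (hconn : IsPreconnected G) (hfr : (frontier G).Nonempty) {x y z : X}
    (hx : x ∈ G) (hy : y ∈ G) (hz : z ∈ G) :
    qhDist G x z ≤ qhDist G x y + qhDist G y z := by
  rw [← sub_le_iff_le_add]
  refine hX.le_qhDist hG hconn hfr hx hy fun γ L h => ?_
  rw [sub_le_comm]
  refine hX.le_qhDist hG hconn hfr hy hz fun γ' L' h' => ?_
  rw [sub_le_iff_le_add', ← qhLength_concat hG hfr h h']
  exact (h.concat h').qhDist_le

theorem qhDist_self {G : Set X} {x : X} (hx : x ∈ G) : qhDist G x x = 0 := by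
  have h : CurveIn G (fun _ => x) 0 x x :=
    ⟨le_rfl, LipschitzOnWith.of_dist_le_mul (by simp), rfl, rfl, fun _ _ => hx⟩
  refine le_antisymm (h.qhDist_le.trans_eq ?_) (qhDist_nonneg G x x)
  simp [qhLength, qhLengthOn]

/-- A function of two parameters that satisfies the triangle inequality and is locally bounded
by increments of `φ` is globally bounded by increments of `φ`. -/
theorem le_sub_of_forall_le_sub_of_triangle {K : ℝ → ℝ → ℝ} {φ : ℝ → ℝ} {L η : ℝ} (hL : 0 ≤ L)
    (hη : 0 < η) (hK : K 0 0 ≤ 0)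
    (htri : ∀ s t, 0 ≤ s → s ≤ t → t ≤ L → K 0 t ≤ K 0 s + K s t)
    (hloc : ∀ s t, 0 ≤ s → s ≤ t → t ≤ L → t - s ≤ η → K s t ≤ φ t - φ s) :
    K 0 L ≤ φ L - φ 0 := by
  have key : ∀ n : ℕ, ∀ t, 0 ≤ t → t ≤ L → t ≤ n * η → K 0 t ≤ φ t - φ 0 := by
    intro n
    induction n with
    | zero =>
      intro t h0 _ ht
      obtain rfl : t = 0 := le_antisymm (by simpa using ht) h0
      simpa using hK
    | succ n ih =>
      intro t h0 htL ht
      push_cast at ht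
      have hs : max 0 (t - η) ≤ t := max_le h0 (by linarith)
      have h₁ := ih (max 0 (t - η)) (le_max_left _ _) (hs.trans htL)
        (max_le (by positivity) (by linarith))
      have h₂ := hloc _ t (le_max_left 0 (t - η)) hs htL (by linarith [le_max_right 0 (t - η)])
      linarith [htri _ t (le_max_left 0 (t - η)) hs htL]
  obtain ⟨n, hn⟩ := exists_nat_ge (L / η)
  exact key n L hL le_rfl ((div_le_iff₀ hη).1 hn)

theorem OpenPartialHomeomorph.isImage_image {e : OpenPartialHomeomorph X Y} {D : Set X}
    (hD : D ⊆ e.source) : e.IsImage D (e '' D) := fun x hx =>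
  ⟨fun ⟨_, hz, h⟩ => e.injOn (hD hz) hx h ▸ hz, fun h => ⟨x, h, rfl⟩⟩

/-- A map whose inverse is Lipschitz for the quasihyperbolic metrics does not decrease too much
the relative size of boundary distances in subdomains. -/
theorem bdist_mul_bdist_image_le {c c' M : ℝ} (hc : 1 ≤ c) (hc' : 1 ≤ c') (hM : 1 ≤ M)
    (hX : QCSpace c X) (hY : QCSpace c' Y) (e : OpenPartialHomeomorph X Y)
    (hconn : IsPreconnected e.source) (hfr : (frontier e.source).Nonempty)
    (hfr' : (frontier e.target).Nonempty)
    (he : ∀ x ∈ e.source, ∀ y ∈ e.source,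
      qhDist e.source x y ≤ M * qhDist e.target (e x) (e y))
    {D : Set X} (hDG : D ⊆ e.source) (hD : IsOpen D) (hDfr' : (frontier (e '' D)).Nonempty)
    {x : X} (hx : x ∈ D) :
    bdist D x * bdist e.target (e x) ≤
      4 * (c * c' * M) * (bdist (e '' D) (e x) * bdist e.source x) := by
  have hG := e.open_source
  have hxG := hDG hx
  have hδ : 0 < bdist e.source x := bdist_pos hG hfr hxG
  have hδ' : 0 < bdist e.target (e x) := bdist_pos e.open_target hfr' (e.map_source hxG)
  have hmono := hX.bdist_mono (by linarith) hD hG hDG hfr hx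
  have hC : 0 < 4 * (c * c' * M) * bdist e.source x := by positivity
  suffices bdist D x * bdist e.target (e x) / (4 * (c * c' * M) * bdist e.source x) ≤
      bdist (e '' D) (e x) by
    rw [div_le_iff₀ hC] at this
    linarith
  refine (le_infDist hDfr').2 fun p hp => ?_
  rw [div_le_iff₀ hC]
  set d := dist (e x) p
  have hd : 0 ≤ d := dist_nonneg
  rcases le_or_gt (c' * d) (bdist e.target (e x) / 2) with hcase | hcase
  · obtain ⟨γ, L, hγ, hlen⟩ := hY.exists_curveIn e.open_target hfr' (e.map_source hxG) hcase
    have hpG : p ∈ e.target := hγ.target ▸ hγ.mem L (right_mem_Icc.2 hγ.nonneg)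
    have hk' := hγ.qhDist_le.trans hlen
    have hqG := e.map_target hpG
    have hk := he x hxG (e.symm p) hqG
    rw [e.right_inv hpG] at hk
    have hqD : e.symm p ∈ frontier D :=
      ((OpenPartialHomeomorph.isImage_image hDG).frontier.symm_apply_mem_iff hpG).2 hp
    have hdist : bdist D x ≤ dist x (e.symm p) := infDist_le_dist_of_mem hqD
    have hlow := hX.dist_div_le_qhDist hG hconn hfr hxG hqG
    have hDnn : 0 ≤ bdist D x := infDist_nonneg
    have hratio : bdist D x / (2 * c * bdist e.source x) ≤
        dist x (e.symm p) / (bdist e.source x + dist x (e.symm p)) := by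
      rw [div_le_div_iff₀ (by positivity) (by positivity)]
      nlinarith [mul_le_mul_of_nonneg_right hmono (dist_nonneg (x := x) (y := e.symm p)),
        mul_nonneg (sub_nonneg.2 hc) (mul_nonneg hδ.le (dist_nonneg (x := x) (y := e.symm p)))]
    have hfin : bdist D x / (2 * c * bdist e.source x) ≤
        M * (2 * c' * d / bdist e.target (e x)) :=
      (hratio.trans hlow).trans (hk.trans (by gcongr))
    rw [← mul_div_assoc, div_le_div_iff₀ (by positivity) hδ'] at hfin
    linarith
  · have h₁ : bdist D x * bdist e.target (e x) ≤ c * bdist e.source x * (2 * (c' * d)) := by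
      gcongr
      linarith
    have h₂ : 0 ≤ c * c' * d * bdist e.source x := by positivity
    nlinarith [mul_nonneg (sub_nonneg.2 hM) h₂]

/-- A quasihyperbolic homeomorphism is Lipschitz for the quasihyperbolic metrics of
subdomains, at small scales. -/
theorem qhDist_image_le_of_dist_le {c c' M : ℝ} (hc : 1 ≤ c) (hc' : 1 ≤ c') (hM : 1 ≤ M)
    (hX : QCSpace c X) (hY : QCSpace c' Y) (e : OpenPartialHomeomorph X Y)
    (hconn : IsPreconnected e.source) (hconn' : IsPreconnected e.target)
    (hfr : (frontier e.source).Nonempty) (hfr' : (frontier e.target).Nonempty)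
    (he : ∀ x ∈ e.source, ∀ y ∈ e.source,
      qhDist e.source x y ≤ M * qhDist e.target (e x) (e y))
    (he' : ∀ x ∈ e.source, ∀ y ∈ e.source,
      qhDist e.target (e x) (e y) ≤ M * qhDist e.source x y)
    {D : Set X} (hDG : D ⊆ e.source) (hD : IsOpen D) (hDconn : IsPreconnected D)
    (hDfr : (frontier D).Nonempty) (hDfr' : (frontier (e '' D)).Nonempty)
    {x y : X} (hx : x ∈ D) (hy : y ∈ D) (h₁ : dist x y ≤ bdist D x)
    (h₂ : c * dist x y ≤ bdist e.source x / 2) (h₃ : dist (e x) (e y) ≤ bdist e.target (e x))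
    (h₄ : c' * dist (e x) (e y) ≤ bdist (e '' D) (e x) / 2) :
    qhDist (e '' D) (e x) (e y) ≤ 64 * (c * c' * M) ^ 2 * qhDist D x y := by
  have hG := e.open_source
  have hG' := e.open_target
  have hD' : IsOpen (e '' D) := e.isOpen_image_of_subset_source hD hDG
  have hxD' : e x ∈ e '' D := mem_image_of_mem e hx
  have hδD := bdist_pos hD hDfr hx
  have hδD' := bdist_pos hD' hDfr' hxD'
  have hδ := bdist_pos hG hfr (hDG hx)
  have hδ' := bdist_pos hG' hfr' (e.map_source (hDG hx))
  have hk := qhDist_nonneg D x y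
  have hratio := bdist_mul_bdist_image_le hc hc' hM hX hY e hconn hfr hfr' he hDG hD hDfr' hx
  calc qhDist (e '' D) (e x) (e y)
      ≤ 2 * c' * dist (e x) (e y) / bdist (e '' D) (e x) := hY.qhDist_le hD' hDfr' hxD' h₄
    _ ≤ 2 * c' * (2 * bdist e.target (e x) * (M * (2 * c * (2 * bdist D x * qhDist D x y) /
          bdist e.source x))) / bdist (e '' D) (e x) := by
        gcongr
        refine (hY.dist_le_mul_qhDist hG' hconn' hfr' (e.map_source (hDG hx))
          (e.map_source (hDG hy)) h₃).trans ?_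
        gcongr
        refine (he' x (hDG hx) y (hDG hy)).trans ?_
        gcongr
        refine (hX.qhDist_le hG hfr (hDG hx) h₂).trans ?_
        gcongr
        exact hX.dist_le_mul_qhDist hD hDconn hDfr hx hy h₁
    _ = 16 * (c * c' * M) * qhDist D x y * (bdist D x * bdist e.target (e x)) /
          (bdist (e '' D) (e x) * bdist e.source x) := by
        field_simp
        ring
    _ ≤ 16 * (c * c' * M) * qhDist D x y *
          (4 * (c * c' * M) * (bdist (e '' D) (e x) * bdist e.source x)) /
          (bdist (e '' D) (e x) * bdist e.source x) := by
        gcongr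
    _ = 64 * (c * c' * M) ^ 2 * qhDist D x y := by
        field_simp
        ring

/-- On a compact interval, a continuous function has small oscillation compared to the distance
to the boundary of an open set containing its image. -/
theorem exists_forall_mul_dist_le_bdist {σ : ℝ → X} {L : ℝ} {G : Set X}
    (hσ : ContinuousOn σ (Icc 0 L)) (hG : IsOpen G) (hfr : (frontier G).Nonempty)
    (hmem : ∀ t ∈ Icc 0 L, σ t ∈ G) {a : ℝ} (ha : 0 < a) :
    ∃ η > 0, ∀ s ∈ Icc 0 L, ∀ t ∈ Icc 0 L, |s - t| ≤ η → a * dist (σ s) (σ t) ≤ bdist G (σ s) := by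
  rcases (Icc (0 : ℝ) L).eq_empty_or_nonempty with hemp | hne
  · exact ⟨1, one_pos, by simp [hemp]⟩
  obtain ⟨u, hu, hmin⟩ := isCompact_Icc.exists_isMinOn hne
    ((continuous_bdist G).comp_continuousOn hσ)
  have hpos := bdist_pos hG hfr (hmem u hu)
  obtain ⟨η, hη, hunif⟩ := Metric.uniformContinuousOn_iff_le.1
    (isCompact_Icc.uniformContinuousOn_of_continuous hσ) (bdist G (σ u) / a) (by positivity)
  refine ⟨η, hη, fun s hs t ht hst => ?_⟩
  have h := hunif s hs t ht hst
  rw [le_div_iff₀' ha] at h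
  exact h.trans (hmin hs)

/-- A quasihyperbolic homeomorphism is Lipschitz for the quasihyperbolic metrics of
subdomains. -/
theorem qhDist_image_le {c c' M : ℝ} (hc : 1 ≤ c) (hc' : 1 ≤ c') (hM : 1 ≤ M)
    (hX : QCSpace c X) (hY : QCSpace c' Y) (e : OpenPartialHomeomorph X Y)
    (hconn : IsPreconnected e.source) (hconn' : IsPreconnected e.target)
    (huniv : e.source ≠ univ) (huniv' : e.target ≠ univ)
    (he : ∀ x ∈ e.source, ∀ y ∈ e.source,
      qhDist e.source x y ≤ M * qhDist e.target (e x) (e y))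
    (he' : ∀ x ∈ e.source, ∀ y ∈ e.source,
      qhDist e.target (e x) (e y) ≤ M * qhDist e.source x y)
    {D : Set X} (hDG : D ⊆ e.source) (hD : IsOpen D) (hDconn : IsPreconnected D)
    {x y : X} (hx : x ∈ D) (hy : y ∈ D) :
    qhDist (e '' D) (e x) (e y) ≤ 64 * (c * c' * M) ^ 2 * qhDist D x y := by
  have hD' : IsOpen (e '' D) := e.isOpen_image_of_subset_source hD hDG
  have hDG' : e '' D ⊆ e.target := (image_mono hDG).trans e.image_source_eq_target.subset
  have hDconn' : IsPreconnected (e '' D) := hDconn.image e (e.continuousOn.mono hDG)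
  have hxD' : e x ∈ e '' D := mem_image_of_mem e hx
  have hfr := hX.frontier_nonempty e.open_source ⟨x, hDG hx⟩ huniv
  have hfr' := hY.frontier_nonempty e.open_target ⟨e x, hDG' hxD'⟩ huniv'
  have hDfr := hX.frontier_nonempty hD ⟨x, hx⟩ fun h => huniv (univ_subset_iff.1 (h ▸ hDG))
  have hDfr' := hY.frontier_nonempty hD' ⟨e x, hxD'⟩
    fun h => huniv' (univ_subset_iff.1 (h ▸ hDG'))
  have hC : 0 < 64 * (c * c' * M) ^ 2 := by positivity
  rw [← div_le_iff₀' hC]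
  refine hX.le_qhDist hD hDconn hDfr hx hy fun γ L h => ?_
  rw [div_le_iff₀' hC]
  have heγ : ContinuousOn (fun t => e (γ t)) (Icc 0 L) :=
    e.continuousOn.comp h.continuousOn fun t ht => hDG (h.mem t ht)
  have hmem' : ∀ t ∈ Icc 0 L, e (γ t) ∈ e '' D := fun t ht => mem_image_of_mem e (h.mem t ht)
  obtain ⟨η₁, hη₁, H₁⟩ := exists_forall_mul_dist_le_bdist h.continuousOn hD hDfr h.mem one_pos
  obtain ⟨η₂, hη₂, H₂⟩ := exists_forall_mul_dist_le_bdist h.continuousOn e.open_source hfr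
    (fun t ht => hDG (h.mem t ht)) (a := 2 * c) (by positivity)
  obtain ⟨η₃, hη₃, H₃⟩ := exists_forall_mul_dist_le_bdist heγ e.open_target hfr'
    (fun t ht => hDG' (hmem' t ht)) one_pos
  obtain ⟨η₄, hη₄, H₄⟩ := exists_forall_mul_dist_le_bdist heγ hD' hDfr' hmem'
    (a := 2 * c') (by positivity)
  have key := le_sub_of_forall_le_sub_of_triangle
    (K := fun s t => qhDist (e '' D) (e (γ s)) (e (γ t)))
    (φ := fun t => 64 * (c * c' * M) ^ 2 * qhLengthOn D γ 0 t)
    (η := min (min η₁ η₂) (min η₃ η₄)) h.nonneg (by positivity)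
    (qhDist_self (hmem' 0 (left_mem_Icc.2 h.nonneg))).le
    (fun s t hs hst ht => hY.qhDist_triangle hD' hDconn' hDfr'
      (hmem' 0 (left_mem_Icc.2 h.nonneg)) (hmem' s ⟨hs, hst.trans ht⟩)
      (hmem' t ⟨hs.trans hst, ht⟩)) ?_
  · simpa [h.source, h.target, qhLength, qhLengthOn] using key
  intro s t hs hst ht hη
  rw [le_min_iff, le_min_iff, le_min_iff] at hη
  have hsI : s ∈ Icc 0 L := ⟨hs, hst.trans ht⟩
  have htI : t ∈ Icc 0 L := ⟨hs.trans hst, ht⟩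
  have habs : |s - t| = t - s := by rw [abs_sub_comm, abs_of_nonneg (sub_nonneg.2 hst)]
  have h₁ := H₁ s hsI t htI (habs ▸ hη.1.1)
  have h₂ := H₂ s hsI t htI (habs ▸ hη.1.2)
  have h₃ := H₃ s hsI t htI (habs ▸ hη.2.1)
  have h₄ := H₄ s hsI t htI (habs ▸ hη.2.2)
  have hloc := qhDist_image_le_of_dist_le hc hc' hM hX hY e hconn hconn' hfr hfr' he he' hDG hD
    hDconn hDfr hDfr' (h.mem s hsI) (h.mem t htI) (by linarith) (by linarith) (by linarith)
    (by linarith)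
  have hadd : qhLengthOn D γ 0 s + qhLengthOn D γ s t = qhLengthOn D γ 0 t :=
    intervalIntegral.integral_add_adjacent_intervals
      (h.intervalIntegrable hD hDfr le_rfl hs (hst.trans ht))
      (h.intervalIntegrable hD hDfr hs hst ht)
  refine hloc.trans ?_
  rw [← hadd, mul_add, add_sub_cancel_left]
  gcongr
  exact h.qhDist_le_qhLengthOn hs hst ht

end QuasihyperbolicMetric

/-- A homeomorphism between open sets, as an open partial homeomorphism of the ambient
spaces. -/
theorem Homeomorph.exists_openPartialHomeomorph {X Y : Type*} [TopologicalSpace X]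
    [TopologicalSpace Y] {G : Set X} {G' : Set Y} (hG : IsOpen G) (hG' : IsOpen G')
    (hne : G.Nonempty) (f : ↥G ≃ₜ ↥G') :
    ∃ e : OpenPartialHomeomorph X Y, e.source = G ∧ e.target = G' ∧
      ∀ x : ↥G, e x = f x := by
  have : Nonempty ↥G := hne.to_subtype
  have : Nonempty ↥G' := ⟨f (Classical.arbitrary _)⟩
  let i := hG.isOpenEmbedding_subtypeVal.toOpenPartialHomeomorph
  let j := hG'.isOpenEmbedding_subtypeVal.toOpenPartialHomeomorph
  refine ⟨i.symm.trans (f.transOpenPartialHomeomorph j), ?_, ?_, fun x => ?_⟩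
  · simp [i, j]
  · simp [i, j]
  · simp only [OpenPartialHomeomorph.coe_trans, Function.comp_apply, i, j]
    rw [hG.isOpenEmbedding_subtypeVal.toOpenPartialHomeomorph_left_inv]
    rfl

/-- Lemma 11: If `f : G → G'` is `M`-quasihyperbolic, `X` is
`c`-quasiconvex and `Y` is `c'`-quasiconvex, then `f` is fully `M'`-QH with
`M' = 216(cc'M)²`: for every subdomain `D ⊆ G` and all `x, y ∈ D`,
`(1/M')·k_D(x,y) ≤ k_{f(D)}(f(x),f(y)) ≤ M'·k_D(x,y)`; that is, `f` is `φ`-FQC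
with `φ(t) = M't`. -/
theorem stmt17 {X : Type*} [MetricSpace X] {Y : Type*} [MetricSpace Y]
    (c c' M : ℝ) (hc : 1 ≤ c) (hc' : 1 ≤ c') (hM : 1 ≤ M)
    (hX : QCSpace c X) (hY : QCSpace c' Y)
    (G : Set X) (G' : Set Y) (hG : IsProperDomain G) (hG' : IsProperDomain G')
    (f : ↥G ≃ₜ ↥G') (hf : MQH M f) :
    (∀ D : Set X, ∀ hD : D ⊆ G, IsDomainSet D →
        ∀ x : X, ∀ hx : x ∈ D, ∀ y : X, ∀ hy : y ∈ D,
          (1 / (216 * (c * c' * M) ^ 2)) * qhDist D x y ≤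
              qhDist (imSet f D) ↑(f ⟨x, hD hx⟩) ↑(f ⟨y, hD hy⟩) ∧
            qhDist (imSet f D) ↑(f ⟨x, hD hx⟩) ↑(f ⟨y, hD hy⟩) ≤
              216 * (c * c' * M) ^ 2 * qhDist D x y) ∧
      FQC (fun t => 216 * (c * c' * M) ^ 2 * t) f := by
  obtain ⟨e, rfl, rfl, hef⟩ := f.exists_openPartialHomeomorph hG.1 hG'.1 hG.2.1.nonempty
  have hM0 : 0 < M := by linarith
  have he : ∀ x ∈ e.source, ∀ y ∈ e.source,
      qhDist e.source x y ≤ M * qhDist e.target (e x) (e y) := fun x hx y hy => by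
    have h := (hf ⟨x, hx⟩ ⟨y, hy⟩).1
    rwa [← hef, ← hef, one_div_mul_eq_div, div_le_iff₀' hM0] at h
  have he' : ∀ x ∈ e.source, ∀ y ∈ e.source,
      qhDist e.target (e x) (e y) ≤ M * qhDist e.source x y := fun x hx y hy => by
    have h := (hf ⟨x, hx⟩ ⟨y, hy⟩).2
    rwa [← hef, ← hef] at h
  have him : ∀ D ⊆ e.source, imSet f D = e '' D := fun D hD => by
    ext p
    constructor
    · rintro ⟨_, ⟨x, hx, rfl⟩, rfl⟩
      exact ⟨x, hx, hef x⟩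
    · rintro ⟨x, hx, rfl⟩
      exact ⟨_, ⟨⟨x, hD hx⟩, hx, rfl⟩, (hef _).symm⟩
  have hconst : 64 * (c * c' * M) ^ 2 ≤ 216 * (c * c' * M) ^ 2 := by gcongr; norm_num
  have key : ∀ D : Set X, ∀ hD : D ⊆ e.source, IsDomainSet D →
      ∀ x : X, ∀ hx : x ∈ D, ∀ y : X, ∀ hy : y ∈ D,
        qhDist (imSet f D) ↑(f ⟨x, hD hx⟩) ↑(f ⟨y, hD hy⟩) ≤
            216 * (c * c' * M) ^ 2 * qhDist D x y ∧
          qhDist D x y ≤ 216 * (c * c' * M) ^ 2 *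
            qhDist (imSet f D) ↑(f ⟨x, hD hx⟩) ↑(f ⟨y, hD hy⟩) := by
    intro D hD hdom x hx y hy
    rw [← hef, ← hef, him D hD]
    refine ⟨(qhDist_image_le hc hc' hM hX hY e hG.2.1.isPreconnected hG'.2.1.isPreconnected
      hG.2.2 hG'.2.2 he he' hD hdom.1 hdom.2.isPreconnected hx hy).trans
      (mul_le_mul_of_nonneg_right hconst (qhDist_nonneg _ _ _)), ?_⟩
    have hDG' : e '' D ⊆ e.target := (image_mono hD).trans e.image_source_eq_target.subset
    have hinv : e.symm '' (e '' D) = D := by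
      rw [e.image_eq_target_inter_inv_preimage hD]
      ext z
      constructor
      · rintro ⟨p, hp, rfl⟩
        exact hp.2
      · intro hz
        exact ⟨e z, ⟨e.map_source (hD hz), by simpa [e.left_inv (hD hz)] using hz⟩,
          e.left_inv (hD hz)⟩
    have h := qhDist_image_le hc' hc hM hY hX e.symm hG'.2.1.isPreconnected
      hG.2.1.isPreconnected hG'.2.2 hG.2.2
      (fun p hp q hq => by
        have := he' _ (e.map_target hp) _ (e.map_target hq)
        rwa [e.right_inv hp, e.right_inv hq] at this)
      (fun p hp q hq => by
        have := he _ (e.map_target hp) _ (e.map_target hq)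
        rwa [e.right_inv hp, e.right_inv hq] at this)
      hDG' (e.isOpen_image_of_subset_source hdom.1 hD)
      (hdom.2.isPreconnected.image e (e.continuousOn.mono hD))
      (mem_image_of_mem e hx) (mem_image_of_mem e hy)
    rw [hinv, e.left_inv (hD hx), e.left_inv (hD hy), mul_comm c' c] at h
    exact h.trans (mul_le_mul_of_nonneg_right hconst (qhDist_nonneg _ _ _))
  refine ⟨fun D hD hdom x hx y hy => ⟨?_, (key D hD hdom x hx y hy).1⟩, key⟩
  have hpos : 0 < 216 * (c * c' * M) ^ 2 := by positivity
  rw [one_div_mul_eq_div, div_le_iff₀' hpos]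
  exact (key D hD hdom x hx y hy).2
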